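/- Let n ≥ 4 be even and u a normal solution with Q e^{nu} ∈ L¹(ℝⁿ). Then for every k > 0, the spherical average of e^{ku} over ∂B_r(0) equals e^{k ū(r) + o(1)} as r → ∞; equivalently, (1/|∂B_r(0)|) ∫_{∂B_r(0)} e^{k(u − ū(r))} dσ → 1 as r → ∞. -/

import Mathlib

open MeasureTheory Filter

noncomputable section

/-- Euclidean space ℝⁿ. -/
abbrev E (n : ℕ) := EuclideanSpace ℝ (Fin n)

/-- Volume of the standard unit n-sphere `|𝕊ⁿ|`. -/
noncomputable def sphereVol (n : ℕ) : ℝ :=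
  (μH[(n : ℝ)] (Metric.sphere (0 : E (n + 1)) 1)).toReal

/-- The Euclidean Laplacian of `u` at `x`. -/
noncomputable def lap {n : ℕ} (u : E n → ℝ) (x : E n) : ℝ :=
  ∑ i : Fin n, fderiv ℝ (fun y => fderiv ℝ u y (EuclideanSpace.single i 1)) x
    (EuclideanSpace.single i 1)

/-- `u` is a normal solution with Q-curvature `Q`. -/
def IsNormal (n : ℕ) (u Q : E n → ℝ) : Prop :=
  ∃ C : ℝ, ∀ x, u x =
    (2 / (Nat.factorial (n - 1) * sphereVol n)) *
      ∫ y, Real.log (‖y‖ / ‖x - y‖) * (Q y * Real.exp (n * u y)) + C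

/-- The constant `α₀`. -/
noncomputable def alpha0 (n : ℕ) (u Q : E n → ℝ) : ℝ :=
  (2 / (Nat.factorial (n - 1) * sphereVol n)) * ∫ y, Q y * Real.exp (n * u y)

/-- Scalar curvature of the conformal metric `e^{2u}|dx|²`. -/
noncomputable def Rg (n : ℕ) (u : E n → ℝ) (x : E n) : ℝ :=
  2 * (n - 1) * Real.exp (-2 * u x) *
    (-(lap u x) - (n - 2) / 2 * ‖gradient u x‖ ^ 2)

/-!
On the sphere `‖x‖ = r` the kernel `log (‖y‖ / ‖x - y‖)` differs by a function of `y` alone from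
`logKernel r x y`, so there `u` is a constant plus a potential bounded by the potential `P` of
`|logKernel r|` with mass distribution `|f| μ`. By Jensen's inequality on both sides,
`1 ≤ ⨍ exp (k (u - ū)) ≤ (⨍ exp (|k| P)) ^ 2`, and it remains to see that `⨍ exp (p P) → 1` for
every `p ≥ 0`.

The mass in the ball of radius `√r` contributes `O(√r / r)` to `P`. The mass `ε` outside this ball
tends to `0`, and by Jensen's inequality in the other variable its contribution `P'` satisfies
`⨍ exp (p P') ≤ 1 + 2 p ε sup_y ⨍ exp (|logKernel r x y| / 2)`. The supremum is finite uniformly in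
`r`: if `w` is orthogonal to `y` and has norm `1 / r`, then
`exp |logKernel r x y| ≤ 2 / |⟪x, w⟫|`, and for a rotation invariant probability measure the means
of `|⟪x, w⟫| ^ (-1 / 2)` can be compared with a one-dimensional Gaussian moment, by averaging over a
Gaussian vector in place of `w`.
-/

section

open Metric Module ProbabilityTheory
open scoped ENNReal NNReal Pointwise RealInnerProductSpace Topology

variable {α : Type*} [MeasurableSpace α] {μ : Measure α}

/- This is Jensen's inequality, with the missing mass `1 - μ univ` put where `φ` vanishes. -/
lemma exp_integral_le_one_add_integral_exp [IsFiniteMeasure μ] (hμ : μ.real Set.univ ≤ 1)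
    {φ : α → ℝ} (hφ : Integrable φ μ) (hexp : Integrable (fun a => Real.exp (φ a)) μ) :
    Real.exp (∫ a, φ a ∂μ) ≤ 1 + ∫ a, Real.exp (φ a) ∂μ := by
  set A := ∫ a, φ a ∂μ with hA
  set θ := μ.real Set.univ with hθ
  have htangent (t : ℝ) : Real.exp A * (1 + t - A) ≤ Real.exp t := by
    rw [show t = A + (t - A) by ring, Real.exp_add]
    gcongr
    linarith [Real.add_one_le_exp (t - A)]
  have hinside : Real.exp A * (θ + A - A * θ) ≤ ∫ a, Real.exp (φ a) ∂μ := by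
    calc Real.exp A * (θ + A - A * θ) = ∫ a, Real.exp A * (1 + φ a - A) ∂μ := by
          rw [integral_const_mul, integral_sub (by fun_prop) (by fun_prop),
            integral_add (by fun_prop) hφ, ← hA]
          simp only [integral_const, smul_eq_mul, mul_one, ← hθ]
          ring
      _ ≤ ∫ a, Real.exp (φ a) ∂μ := integral_mono (by fun_prop) hexp fun a => htangent (φ a)
  have houtside : (1 - θ) * (Real.exp A * (1 - A)) ≤ 1 - θ := by
    refine mul_le_of_le_one_right (sub_nonneg.2 hμ) ?_
    simpa using htangent 0
  linarith [measureReal_nonneg (μ := μ) (s := Set.univ)]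

lemma ofReal_exp_integral_le (hμ : μ Set.univ ≤ 1) {φ : α → ℝ} (hφ : AEMeasurable φ μ) :
    ENNReal.ofReal (Real.exp (∫ a, φ a ∂μ)) ≤ 1 + ∫⁻ a, ENNReal.ofReal (Real.exp (φ a)) ∂μ := by
  have : IsFiniteMeasure μ := ⟨hμ.trans_lt ENNReal.one_lt_top⟩
  by_cases htop : ∫⁻ a, ENNReal.ofReal (Real.exp (φ a)) ∂μ = ∞
  · simp [htop]
  by_cases hint : Integrable φ μ
  swap
  · simp [integral_undef hint]
  have hexp : Integrable (fun a => Real.exp (φ a)) μ :=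
    (lintegral_ofReal_ne_top_iff_integrable (by fun_prop)
      (ae_of_all _ fun a => Real.exp_nonneg _)).1 htop
  have hmass : μ.real Set.univ ≤ 1 := ENNReal.toReal_le_of_le_ofReal zero_le_one (by simpa using hμ)
  rw [← ofReal_integral_eq_lintegral_ofReal hexp (ae_of_all _ fun a => Real.exp_nonneg _),
    ← ENNReal.ofReal_one, ← ENNReal.ofReal_add zero_le_one
    (integral_nonneg fun a => Real.exp_nonneg _)]
  exact ENNReal.ofReal_le_ofReal (exp_integral_le_one_add_integral_exp hmass hint hexp)

lemma integrable_exp_mul_and_integral_le {φ ψ : α → ℝ} (hφ : AEMeasurable φ μ) (hle : φ ≤ᵐ[μ] ψ)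
    {p : ℝ} (hp : 0 ≤ p) (hψ : ∫⁻ x, ENNReal.ofReal (Real.exp (p * ψ x)) ∂μ ≠ ∞) :
    Integrable (fun x => Real.exp (p * φ x)) μ ∧
      ∫ x, Real.exp (p * φ x) ∂μ ≤ (∫⁻ x, ENNReal.ofReal (Real.exp (p * ψ x)) ∂μ).toReal := by
  have hmono : ∫⁻ x, ENNReal.ofReal (Real.exp (p * φ x)) ∂μ ≤
      ∫⁻ x, ENNReal.ofReal (Real.exp (p * ψ x)) ∂μ := by
    refine lintegral_mono_ae ?_
    filter_upwards [hle] with x hx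
    gcongr
  have hnonneg : 0 ≤ᵐ[μ] fun x => Real.exp (p * φ x) := ae_of_all _ fun _ => Real.exp_nonneg _
  refine ⟨(lintegral_ofReal_ne_top_iff_integrable (by fun_prop) hnonneg).1
    (ne_top_of_le_ne_top hψ hmono), ?_⟩
  rw [integral_eq_lintegral_of_nonneg_ae hnonneg (by fun_prop)]
  exact ENNReal.toReal_mono hψ hmono

section ExponentialMean

variable {g : α → ℝ} {k d : ℝ}

lemma integrable_of_integrable_exp_abs_sub [IsFiniteMeasure μ]
    (hg : AEStronglyMeasurable g μ)
    (hexp : Integrable (fun x => Real.exp |g x - d|) μ) : Integrable g μ := by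
  refine ((integrable_const |d|).add hexp).mono' hg (ae_of_all _ fun x => ?_)
  rw [Real.norm_eq_abs, Pi.add_apply]
  linarith [Real.add_one_le_exp |g x - d|, abs_sub_abs_le_abs_sub (g x) d]

lemma integrable_exp_mul_sub (hg : AEMeasurable g μ)
    (hexp : Integrable (fun x => Real.exp (|k| * |g x - d|)) μ) (a : ℝ) :
    Integrable (fun x => Real.exp (k * (g x - a))) μ := by
  refine (hexp.const_mul (Real.exp (|k| * |d - a|))).mono' (by fun_prop) (ae_of_all _ fun x => ?_)
  rw [Real.norm_of_nonneg (Real.exp_nonneg _), ← Real.exp_add, ← mul_add]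
  refine Real.exp_le_exp.2 ((le_abs_self _).trans ?_)
  rw [abs_mul, add_comm]
  gcongr
  exact abs_sub_le _ _ _

variable [IsProbabilityMeasure μ]

lemma one_le_integral_exp_mul_sub_integral (hg : Integrable g μ)
    (hexp : Integrable (fun x => Real.exp (|k| * |g x - d|)) μ) :
    1 ≤ ∫ x, Real.exp (k * (g x - ∫ z, g z ∂μ)) ∂μ := by
  have hjensen := convexOn_exp.map_integral_le (μ := μ) (f := fun x => k * (g x - ∫ z, g z ∂μ))
    Real.continuous_exp.continuousOn isClosed_univ (ae_of_all _ fun x => Set.mem_univ _)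
    ((hg.sub (integrable_const _)).const_mul k)
    (integrable_exp_mul_sub hg.aemeasurable hexp _)
  simpa [integral_const_mul, integral_sub hg (integrable_const _)] using hjensen

lemma integral_exp_mul_sub_integral_le_sq (hg : Integrable g μ)
    (hexp : Integrable (fun x => Real.exp (|k| * |g x - d|)) μ) :
    ∫ x, Real.exp (k * (g x - ∫ z, g z ∂μ)) ∂μ ≤ (∫ x, Real.exp (|k| * |g x - d|) ∂μ) ^ 2 := by
  have habs : Integrable (fun x => |g x - d|) μ := (hg.sub (integrable_const d)).abs
  have hjensen : Real.exp (|k| * ∫ x, |g x - d| ∂μ) ≤ ∫ x, Real.exp (|k| * |g x - d|) ∂μ := by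
    rw [← integral_const_mul]
    exact convexOn_exp.map_integral_le Real.continuous_exp.continuousOn isClosed_univ
      (ae_of_all _ fun x => Set.mem_univ _) (habs.const_mul _) hexp
  have hmean : |d - ∫ z, g z ∂μ| ≤ ∫ x, |g x - d| ∂μ := by
    have hdiff : d - ∫ z, g z ∂μ = ∫ x, (d - g x) ∂μ := by
      rw [integral_sub (integrable_const d) hg, integral_const, probReal_univ, one_smul]
    simpa only [hdiff, abs_sub_comm d] using abs_integral_le_integral_abs (f := fun x => d - g x)
  calc ∫ x, Real.exp (k * (g x - ∫ z, g z ∂μ)) ∂μ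
      ≤ ∫ x, Real.exp (|k| * ∫ x, |g x - d| ∂μ) * Real.exp (|k| * |g x - d|) ∂μ := by
        refine integral_mono (integrable_exp_mul_sub hg.aemeasurable hexp _) (hexp.const_mul _)
          fun x => ?_
        simp only
        rw [← Real.exp_add, ← mul_add]
        refine Real.exp_le_exp.2 ((le_abs_self _).trans ?_)
        rw [abs_mul, add_comm]
        gcongr
        exact (abs_sub_le _ d _).trans (by gcongr)
    _ = Real.exp (|k| * ∫ x, |g x - d| ∂μ) * ∫ x, Real.exp (|k| * |g x - d|) ∂μ :=
        integral_const_mul _ _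
    _ ≤ (∫ x, Real.exp (|k| * |g x - d|) ∂μ) ^ 2 := by
        rw [sq]
        exact mul_le_mul_of_nonneg_right hjensen (integral_nonneg fun x => Real.exp_nonneg _)

end ExponentialMean

lemma tendsto_sqrt_div_self_atTop : Tendsto (fun r : ℝ => √r / r) atTop (𝓝 0) := by
  simpa only [Real.sqrt_div_self'] using Real.tendsto_sqrt_atTop.const_div_atTop 1

lemma integrable_comp_abs {f : ℝ → ℝ} (hf : IntegrableOn f (Set.Ioi 0)) :
    Integrable fun t => f |t| := by
  have hpos : IntegrableOn (fun t => f |t|) (Set.Ioi 0) :=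
    hf.congr_fun (fun t ht => by rw [abs_of_pos ht]) measurableSet_Ioi
  have hneg : IntegrableOn (fun t => f |t|) (Set.Iio 0) := by
    rw [← (Measure.measurePreserving_neg (volume : Measure ℝ)).integrableOn_comp_preimage
      (Homeomorph.neg ℝ).measurableEmbedding]
    simpa only [Function.comp_def, abs_neg, Set.neg_preimage, Set.neg_Iio, neg_zero] using hpos
  rw [← integrableOn_univ, ← Set.Iio_union_Ici (a := (0 : ℝ)), integrableOn_union,
    integrableOn_Ici_iff_integrableOn_Ioi]
  exact ⟨hneg, hpos⟩

lemma lintegral_gaussianReal_enorm_rpow_lt_top {p : ℝ} (hp : -1 < p) :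
    ∫⁻ t, ‖t‖ₑ ^ p ∂gaussianReal 0 1 < ∞ := by
  have hint : Integrable fun t : ℝ =>
      (√(2 * Real.pi))⁻¹ * (|t| ^ p * Real.exp (-(1 / 2) * |t| ^ 2)) :=
    (integrable_comp_abs (integrableOn_rpow_mul_exp_neg_mul_sq one_half_pos hp)).const_mul _
  rw [gaussianReal_of_var_ne_zero _ one_ne_zero,
    lintegral_withDensity_eq_lintegral_mul _ (measurable_gaussianPDF 0 1) (by fun_prop)]
  refine (lintegral_mono_ae ?_).trans_lt hint.2
  filter_upwards [Measure.ae_ne volume 0] with t ht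
  rw [Pi.mul_apply, Real.enorm_eq_ofReal_abs, ENNReal.ofReal_rpow_of_pos (abs_pos.2 ht),
    gaussianPDF, ← ENNReal.ofReal_mul (gaussianPDFReal_nonneg _ _ _),
    Real.enorm_of_nonneg (by positivity)]
  refine (congrArg ENNReal.ofReal ?_).le
  simp only [gaussianPDFReal, NNReal.coe_one, sub_zero, sq_abs, mul_one]
  ring_nf

variable {V : Type*} [NormedAddCommGroup V]

/-- The kernel `log (1 / ‖x - y‖)`, shifted by a function of `y` alone such that, for `x` on the
sphere of radius `r`, it is bounded below by `-log 2` and tends to `0` as `y` tends to `0`. -/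
def logKernel (r : ℝ) (x y : V) : ℝ := Real.log (max ‖y‖ r / ‖x - y‖)

lemma abs_logKernel_le_of_norm_le {r R : ℝ} (hr : 0 < r) (hRr : 2 * R ≤ r) {x y : V}
    (hx : ‖x‖ = r) (hy : ‖y‖ ≤ R) : |logKernel r x y| ≤ 2 * R / r := by
  have hR : 0 ≤ R := (norm_nonneg y).trans hy
  have hup : ‖x - y‖ ≤ r + R := by linarith [norm_sub_le x y]
  have hlow : r - R ≤ ‖x - y‖ := by linarith [norm_sub_norm_le x y]
  have hxy : 0 < ‖x - y‖ := by linarith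
  rw [logKernel, max_eq_right (by linarith), abs_le]
  constructor
  · rw [neg_le, ← Real.log_inv, inv_div]
    refine (Real.log_le_sub_one_of_pos (by positivity)).trans ?_
    rw [sub_le_iff_le_add, div_add_one hr.ne', div_le_div_iff_of_pos_right hr]
    linarith
  · refine (Real.log_le_sub_one_of_pos (by positivity)).trans ?_
    rw [sub_le_iff_le_add, div_add_one hr.ne', div_le_div_iff₀ hxy hr]
    nlinarith

section AbsLogPotential

variable [MeasurableSpace V]

/-- The potential of `ν` with respect to the absolute value of `logKernel r`; it is `0` where the
integral diverges, by Lean's convention for integrals of non-integrable functions. -/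
def absLogPotential (r : ℝ) (ν : Measure V) (x : V) : ℝ := ∫ y, |logKernel r x y| ∂ν

lemma absLogPotential_nonneg (r : ℝ) (ν : Measure V) (x : V) : 0 ≤ absLogPotential r ν x :=
  integral_nonneg fun _ => abs_nonneg _

lemma one_le_lintegral_exp_mul_absLogPotential {p : ℝ} (hp : 0 ≤ p) (r : ℝ) (ν σ : Measure V)
    [IsProbabilityMeasure σ] :
    1 ≤ ∫⁻ x, ENNReal.ofReal (Real.exp (p * absLogPotential r ν x)) ∂σ :=
  calc (1 : ℝ≥0∞) = ∫⁻ _, 1 ∂σ := by simp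
    _ ≤ _ := lintegral_mono fun x => by
        rw [ENNReal.one_le_ofReal, Real.one_le_exp_iff]
        exact mul_nonneg hp (absLogPotential_nonneg r ν x)

lemma log_div_ae_eq_logKernel_sub {μ : Measure V} [NullSingletonClass μ] {r : ℝ} (hr : 0 < r)
    (x : V) : ∀ᵐ y ∂μ, Real.log (‖y‖ / ‖x - y‖) =
      logKernel r x y - Real.log (max ‖y‖ r / ‖y‖) := by
  filter_upwards [Measure.ae_ne μ 0, Measure.ae_ne μ x] with y hy hyx
  have hy' : ‖y‖ ≠ 0 := norm_ne_zero_iff.2 hy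
  have hxy : ‖x - y‖ ≠ 0 := norm_ne_zero_iff.2 (sub_ne_zero.2 hyx.symm)
  have hmax : max ‖y‖ r ≠ 0 := (lt_max_of_lt_right hr).ne'
  rw [logKernel, Real.log_div hy' hxy, Real.log_div hmax hxy, Real.log_div hmax hy']
  ring

lemma abs_integral_logKernel_mul_le {μ : Measure V} {f : V → ℝ} (hf : AEMeasurable f μ) (r : ℝ)
    (x : V) :
    |∫ y, logKernel r x y * f y ∂μ| ≤ absLogPotential r (μ.withDensity fun y => ‖f y‖ₑ) x := by
  rw [absLogPotential, integral_withDensity_eq_integral_toReal_smul₀ hf.enorm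
    (ae_of_all _ fun _ => enorm_lt_top)]
  refine abs_integral_le_integral_abs.trans_eq (integral_congr_ae (ae_of_all _ fun y => ?_))
  simp [abs_mul, mul_comm]

variable [OpensMeasurableSpace V]

lemma absLogPotential_le_add {r R : ℝ} (hr : 0 < r) (hR : 0 ≤ R) (hRr : 2 * R ≤ r) (ν : Measure V)
    [IsFiniteMeasure ν] {x : V} (hx : ‖x‖ = r) :
    absLogPotential r ν x ≤
      2 * R / r * ν.real Set.univ + absLogPotential r (ν.restrict (closedBall 0 R)ᶜ) x := by
  by_cases hint : Integrable (fun y => |logKernel r x y|) ν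
  swap
  · rw [absLogPotential, integral_undef hint]
    have := absLogPotential_nonneg r (ν.restrict (closedBall 0 R)ᶜ) x
    positivity
  have hnear : ∫ y in closedBall 0 R, |logKernel r x y| ∂ν ≤ 2 * R / r * ν.real Set.univ :=
    calc ∫ y in closedBall 0 R, |logKernel r x y| ∂ν
        ≤ 2 * R / r * ν.real (closedBall 0 R) :=
          (Real.le_norm_self _).trans <|
            norm_setIntegral_le_of_norm_le_const (measure_lt_top _ _) fun y hy => by
              rw [Real.norm_eq_abs, abs_abs]
              exact abs_logKernel_le_of_norm_le hr hRr hx (mem_closedBall_zero_iff.1 hy)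
      _ ≤ 2 * R / r * ν.real Set.univ := by
          have hsub := measureReal_mono (μ := ν) (Set.subset_univ (closedBall 0 R))
          have : 0 ≤ 2 * R / r := by positivity
          gcongr
  rw [absLogPotential, ← integral_add_compl measurableSet_closedBall hint]
  exact add_le_add_left hnear _

end AbsLogPotential

variable [InnerProductSpace ℝ V]

lemma exp_abs_logKernel_le {r : ℝ} (hr : 0 < r) {x y w : V} (hx : ‖x‖ = r) (hw : ‖w‖ = r⁻¹)
    (hyw : ⟪y, w⟫ = 0) (hxw : ⟪x, w⟫ ≠ 0) :
    Real.exp |logKernel r x y| ≤ 2 * |⟪x, w⟫|⁻¹ := by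
  set t := |⟪x, w⟫|
  have ht0 : 0 < t := abs_pos.2 hxw
  have ht1 : t ≤ 1 := by
    simpa [hx, hw, hr.ne'] using abs_real_inner_le_norm x w
  have htle : t * r ≤ ‖x - y‖ := by
    have h := abs_real_inner_le_norm (x - y) w
    rwa [inner_sub_left, hyw, sub_zero, hw, ← div_eq_mul_inv, le_div_iff₀ hr] at h
  have hxy : 0 < ‖x - y‖ := (mul_pos ht0 hr).trans_le htle
  have hmax : 0 < max ‖y‖ r := lt_max_of_lt_right hr
  have hup : ‖x - y‖ ≤ ‖y‖ + r := by linarith [norm_sub_le x y]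
  have hlow : ‖y‖ - r ≤ ‖x - y‖ := by
    rw [← hx, norm_sub_rev]
    exact norm_sub_norm_le y x
  rw [← div_eq_mul_inv]
  rcases abs_cases (logKernel r x y) with ⟨h, -⟩ | ⟨h, -⟩
  · rw [h, logKernel, Real.exp_log (by positivity), div_le_div_iff₀ hxy ht0]
    rcases le_total ‖y‖ (2 * r) with hy | hy
    · have : max ‖y‖ r ≤ 2 * r := max_le hy (by linarith)
      nlinarith
    · rw [max_eq_left (by linarith)]
      nlinarith [norm_nonneg y]
  · rw [h, logKernel, Real.exp_neg, Real.exp_log (by positivity), inv_div]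
    calc ‖x - y‖ / max ‖y‖ r ≤ 2 := by
          rw [div_le_iff₀ hmax]
          linarith [le_max_left ‖y‖ r, le_max_right ‖y‖ r]
      _ ≤ 2 / t := le_div_self zero_le_two ht0 ht1

lemma ofReal_exp_mul_abs_logKernel_le {r : ℝ} (hr : 0 < r) {x y w : V} (hx : ‖x‖ = r)
    (hw : ‖w‖ = r⁻¹) (hyw : ⟪y, w⟫ = 0) {s : ℝ} (hs : 0 < s) :
    ENNReal.ofReal (Real.exp (s * |logKernel r x y|)) ≤ 2 ^ s * ‖⟪x, w⟫‖ₑ ^ (-s) := by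
  rcases eq_or_ne ⟪x, w⟫ 0 with h0 | h0
  · simp [h0, hs]
  calc ENNReal.ofReal (Real.exp (s * |logKernel r x y|))
      = ENNReal.ofReal (Real.exp |logKernel r x y|) ^ s := by
        rw [ENNReal.ofReal_rpow_of_pos (Real.exp_pos _), ← Real.exp_mul, mul_comm]
    _ ≤ ENNReal.ofReal (2 * |⟪x, w⟫|⁻¹) ^ s := by
        gcongr
        exact exp_abs_logKernel_le hr hx hw hyw h0
    _ = 2 ^ s * ‖⟪x, w⟫‖ₑ ^ (-s) := by
        rw [ENNReal.ofReal_mul zero_le_two, ENNReal.ofReal_inv_of_pos (abs_pos.2 h0),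
          ← Real.enorm_eq_ofReal_abs, ENNReal.mul_rpow_of_nonneg _ _ hs.le, ENNReal.inv_rpow,
          ENNReal.rpow_neg, ENNReal.ofReal_ofNat]

lemma ball_subset_image_orthogonalProjectionOnto_sphere {v : V} (hv : ‖v‖ = 1) {r : ℝ}
    (hr : 0 ≤ r) : ball 0 r ⊆ (ℝ ∙ v)ᗮ.orthogonalProjectionOnto '' sphere (0 : V) r := by
  intro z hz
  have hzr : 0 ≤ r ^ 2 - ‖z‖ ^ 2 := by
    rw [mem_ball_zero_iff] at hz
    nlinarith [norm_nonneg z]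
  refine ⟨z + √(r ^ 2 - ‖z‖ ^ 2) • v, ?_, ?_⟩
  · have hzv : ⟪(z : V), v⟫ = 0 := Submodule.mem_orthogonal_singleton_iff_inner_left.1 z.2
    rw [mem_sphere_zero_iff_norm, ← sq_eq_sq₀ (norm_nonneg _) hr, norm_add_sq_real,
      inner_smul_right, hzv, norm_smul, hv, Real.norm_of_nonneg (Real.sqrt_nonneg _), mul_one,
      Real.sq_sqrt hzr]
    simp
  · have hproj : (ℝ ∙ v)ᗮ.orthogonalProjectionOnto v = 0 := by simp
    rw [map_add, map_smul, Submodule.orthogonalProjectionOnto_mem_subspace_eq_self, hproj,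
      smul_zero, add_zero]

variable [FiniteDimensional ℝ V]

lemma exists_norm_eq_inner_eq_zero (hV : 2 ≤ finrank ℝ V) (y : V) {c : ℝ} (hc : 0 ≤ c) :
    ∃ w : V, ‖w‖ = c ∧ ⟪y, w⟫ = 0 := by
  have hpos : 0 < finrank ℝ (ℝ ∙ y)ᗮ := by
    have hsum := Submodule.finrank_add_finrank_orthogonal (ℝ ∙ y)
    have hle : finrank ℝ (ℝ ∙ y) ≤ 1 :=
      (finrank_span_le_card (R := ℝ) ({y} : Set V)).trans (by simp)
    lia
  have : Nontrivial (ℝ ∙ y)ᗮ := finrank_pos_iff.1 hpos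
  obtain ⟨w, hw⟩ := exists_norm_eq (ℝ ∙ y)ᗮ hc
  exact ⟨w, hw, Submodule.mem_orthogonal_singleton_iff_inner_right.1 w.2⟩

lemma cast_finrank_orthogonal_span_singleton {v : V} (hv : v ≠ 0) :
    (finrank ℝ (ℝ ∙ v)ᗮ : ℝ) = (finrank ℝ V : ℝ) - 1 := by
  have hsum := Submodule.finrank_add_finrank_orthogonal (ℝ ∙ v)
  rw [finrank_span_singleton hv] at hsum
  rw [← hsum]
  push_cast
  ring

lemma finrank_sub_one_nonneg [Nontrivial V] : (0 : ℝ) ≤ (finrank ℝ V : ℝ) - 1 :=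
  sub_nonneg.2 (by exact_mod_cast (finrank_pos : 0 < finrank ℝ V))

variable [MeasurableSpace V] [BorelSpace V]

lemma measurable_logKernel (r : ℝ) : Measurable fun z : V × V => logKernel r z.1 z.2 := by
  unfold logKernel
  fun_prop

lemma measurable_logKernel_right (r : ℝ) (x : V) : Measurable (logKernel r x) :=
  (measurable_logKernel r).comp measurable_prodMk_left

lemma map_inner_stdGaussian (x : V) :
    (stdGaussian V).map (fun w => ⟪x, w⟫) = gaussianReal 0 (‖x‖₊ ^ 2) := by
  have h := IsGaussian.map_eq_gaussianReal (μ := stdGaussian V) (innerSL ℝ x)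
  rw [integral_strongDual_stdGaussian, variance_dual_stdGaussian, innerSL_apply_norm,
    ← coe_nnnorm, ← NNReal.coe_pow, Real.toNNReal_coe] at h
  exact h

lemma lintegral_stdGaussian_enorm_rpow_ne_zero {p : ℝ} (hp : p < 0) :
    ∫⁻ v : V, ‖v‖ₑ ^ p ∂stdGaussian V ≠ 0 := by
  have hsupp : (Function.support fun v : V => ‖v‖ₑ ^ p) = Set.univ :=
    Set.eq_univ_of_forall fun v => by simp [ENNReal.rpow_eq_zero_iff, hp.not_gt]
  refine ((lintegral_pos_iff_support (by fun_prop)).2 ?_).ne'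
  simp [hsupp]

/-- The rotation invariant probability measures on the sphere of radius `r` about the origin. These
properties of normalized surface measure are all that the estimates of potentials rely on. -/
structure IsUniformOnSphere (σ : Measure V) (r : ℝ) : Prop where
  isProbabilityMeasure : IsProbabilityMeasure σ
  ae_norm_eq : ∀ᵐ x ∂σ, ‖x‖ = r
  measurePreserving : ∀ L : V ≃ₗᵢ[ℝ] V, MeasurePreserving L σ σ

/-- A constant dominating, for every vector `w` of norm `r⁻¹`, the average of `|⟪x, w⟫| ^ p` over
the sphere of radius `r`. -/
def sphereMomentBound (V : Type*) [NormedAddCommGroup V] [InnerProductSpace ℝ V]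
    [FiniteDimensional ℝ V] [MeasurableSpace V] (p : ℝ) : ℝ≥0∞ :=
  (∫⁻ t, ‖t‖ₑ ^ p ∂gaussianReal 0 1) / ∫⁻ v : V, ‖v‖ₑ ^ p ∂stdGaussian V

lemma sphereMomentBound_lt_top {p : ℝ} (hp : -1 < p) (hp' : p < 0) :
    sphereMomentBound V p < ∞ :=
  ENNReal.div_lt_top (lintegral_gaussianReal_enorm_rpow_lt_top hp).ne
    (lintegral_stdGaussian_enorm_rpow_ne_zero hp')

namespace IsUniformOnSphere

variable {σ : Measure V} {r : ℝ}

lemma lintegral_comp_inner_congr (hσ : IsUniformOnSphere σ r) {F : ℝ → ℝ≥0∞} (hF : Measurable F)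
    {v w : V} (hvw : ‖v‖ = ‖w‖) : ∫⁻ x, F ⟪x, v⟫ ∂σ = ∫⁻ x, F ⟪x, w⟫ ∂σ := by
  set L : V ≃ₗᵢ[ℝ] V := (ℝ ∙ (v - w))ᗮ.reflection
  have hL : L v = w := Submodule.reflection_sub hvw
  rw [← hL, ← (hσ.measurePreserving L).lintegral_comp (f := fun x => F ⟪x, L v⟫) (by fun_prop)]
  simp only [L.inner_map_map]

lemma lintegral_stdGaussian_comp_inner (hσ : IsUniformOnSphere σ r) (hr : 0 < r) {F : ℝ → ℝ≥0∞}
    (hF : Measurable F) :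
    ∫⁻ v, ∫⁻ x, F ⟪x, r⁻¹ • v⟫ ∂σ ∂stdGaussian V = ∫⁻ t, F t ∂gaussianReal 0 1 := by
  have := hσ.isProbabilityMeasure
  rw [lintegral_lintegral_swap (by fun_prop)]
  refine (lintegral_congr_ae (g := fun _ => ∫⁻ t, F t ∂gaussianReal 0 1) ?_).trans (by simp)
  filter_upwards [hσ.ae_norm_eq] with x hx
  have hunit : ‖r⁻¹ • x‖₊ = 1 := by
    rw [← NNReal.coe_inj, coe_nnnorm, norm_smul, hx, Real.norm_of_nonneg (by positivity),
      inv_mul_cancel₀ hr.ne', NNReal.coe_one]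
  have hmap := map_inner_stdGaussian (r⁻¹ • x)
  rw [hunit, one_pow] at hmap
  rw [← hmap, lintegral_map hF (by fun_prop)]
  simp only [real_inner_smul_left, real_inner_smul_right]

lemma lintegral_enorm_inner_rpow_le (hσ : IsUniformOnSphere σ r) (hr : 0 < r) {w : V}
    (hw : ‖w‖ = r⁻¹) {p : ℝ} (hp : -1 < p) (hp' : p < 0) :
    ∫⁻ x, ‖⟪x, w⟫‖ₑ ^ p ∂σ ≤ sphereMomentBound V p := by
  have hhom (v : V) :
      ‖v‖ₑ ^ p * ∫⁻ x, ‖⟪x, w⟫‖ₑ ^ p ∂σ = ∫⁻ x, ‖⟪x, r⁻¹ • v⟫‖ₑ ^ p ∂σ := by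
    have hnorm : ‖r⁻¹ • v‖ = ‖‖v‖ • w‖ := by
      rw [norm_smul, norm_smul, hw, norm_norm, Real.norm_of_nonneg (by positivity), mul_comm]
    rw [hσ.lintegral_comp_inner_congr (F := fun t => ‖t‖ₑ ^ p) (by fun_prop) hnorm,
      ← lintegral_const_mul _ (by fun_prop)]
    refine lintegral_congr fun x => ?_
    rw [real_inner_smul_right, enorm_mul, enorm_norm,
      ENNReal.mul_rpow_of_ne_top enorm_ne_top enorm_ne_top]
  rw [sphereMomentBound, ENNReal.le_div_iff_mul_le
    (.inl (lintegral_stdGaussian_enorm_rpow_ne_zero hp'))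
    (.inr (lintegral_gaussianReal_enorm_rpow_lt_top hp).ne), mul_comm]
  calc (∫⁻ v : V, ‖v‖ₑ ^ p ∂stdGaussian V) * ∫⁻ x, ‖⟪x, w⟫‖ₑ ^ p ∂σ
      = ∫⁻ v : V, ‖v‖ₑ ^ p * ∫⁻ x, ‖⟪x, w⟫‖ₑ ^ p ∂σ ∂stdGaussian V :=
        (lintegral_mul_const _ (by fun_prop)).symm
    _ = ∫⁻ v, ∫⁻ x, ‖⟪x, r⁻¹ • v⟫‖ₑ ^ p ∂σ ∂stdGaussian V := lintegral_congr hhom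
    _ ≤ ∫⁻ t, ‖t‖ₑ ^ p ∂gaussianReal 0 1 :=
        (hσ.lintegral_stdGaussian_comp_inner hr (F := fun t => ‖t‖ₑ ^ p) (by fun_prop)).le

lemma lintegral_exp_mul_abs_logKernel_le (hσ : IsUniformOnSphere σ r) (hV : 2 ≤ finrank ℝ V)
    (hr : 0 < r) {s : ℝ} (hs : 0 < s) (hs' : s < 1) (y : V) :
    ∫⁻ x, ENNReal.ofReal (Real.exp (s * |logKernel r x y|)) ∂σ ≤
      2 ^ s * sphereMomentBound V (-s) := by
  obtain ⟨w, hw, hyw⟩ := exists_norm_eq_inner_eq_zero hV y (inv_nonneg.2 hr.le)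
  calc ∫⁻ x, ENNReal.ofReal (Real.exp (s * |logKernel r x y|)) ∂σ
      ≤ ∫⁻ x, 2 ^ s * ‖⟪x, w⟫‖ₑ ^ (-s) ∂σ := by
        refine lintegral_mono_ae ?_
        filter_upwards [hσ.ae_norm_eq] with x hx
        exact ofReal_exp_mul_abs_logKernel_le hr hx hw hyw hs
    _ = 2 ^ s * ∫⁻ x, ‖⟪x, w⟫‖ₑ ^ (-s) ∂σ := lintegral_const_mul _ (by fun_prop)
    _ ≤ 2 ^ s * sphereMomentBound V (-s) := by
        gcongr
        exact hσ.lintegral_enorm_inner_rpow_le hr hw (by linarith) (by linarith)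

lemma lintegral_lintegral_exp_mul_abs_logKernel_le (hσ : IsUniformOnSphere σ r)
    (hV : 2 ≤ finrank ℝ V) (hr : 0 < r) {s : ℝ} (hs : 0 < s) (hs' : s < 1) (ν : Measure V)
    [SFinite ν] :
    ∫⁻ x, ∫⁻ y, ENNReal.ofReal (Real.exp (s * |logKernel r x y|)) ∂ν ∂σ ≤
      2 ^ s * sphereMomentBound V (-s) * ν Set.univ := by
  have := hσ.isProbabilityMeasure
  have hmeas := measurable_logKernel (V := V) r
  rw [lintegral_lintegral_swap (by unfold Function.uncurry; fun_prop), ← lintegral_const]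
  exact lintegral_mono fun y => hσ.lintegral_exp_mul_abs_logKernel_le hV hr hs hs' y

lemma ae_integrable_logKernel (hσ : IsUniformOnSphere σ r) (hV : 2 ≤ finrank ℝ V) (hr : 0 < r)
    (ν : Measure V) [IsFiniteMeasure ν] : ∀ᵐ x ∂σ, Integrable (logKernel r x) ν := by
  have hlt : ∫⁻ x, ∫⁻ y, ENNReal.ofReal (Real.exp (1 / 2 * |logKernel r x y|)) ∂ν ∂σ < ∞ :=
    (hσ.lintegral_lintegral_exp_mul_abs_logKernel_le hV hr one_half_pos one_half_lt_one ν).trans_lt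
      (ENNReal.mul_lt_top (ENNReal.mul_lt_top (ENNReal.rpow_lt_top_of_nonneg (by simp) (by simp))
        (sphereMomentBound_lt_top (by norm_num) (by norm_num))) (measure_lt_top ν Set.univ))
  have hmeas := measurable_logKernel (V := V) r
  have hmeas' : Measurable fun z : V × V =>
      ENNReal.ofReal (Real.exp (1 / 2 * |logKernel r z.1 z.2|)) := by fun_prop
  filter_upwards [ae_lt_top hmeas'.lintegral_prod_right' hlt.ne] with x hx
  have hmx := measurable_logKernel_right r x
  have hexp : Integrable (fun y => Real.exp (1 / 2 * |logKernel r x y|)) ν :=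
    (lintegral_ofReal_ne_top_iff_integrable (by fun_prop)
      (ae_of_all _ fun a => Real.exp_nonneg _)).1 hx.ne
  refine (hexp.const_mul 2).mono' hmx.aestronglyMeasurable (ae_of_all _ fun y => ?_)
  rw [Real.norm_eq_abs]
  linarith [Real.add_one_le_exp (1 / 2 * |logKernel r x y|)]

end IsUniformOnSphere

lemma ofReal_exp_mul_absLogPotential_le {p : ℝ} (hp : 0 ≤ p) (r : ℝ) {ν : Measure V}
    (hν : ENNReal.ofReal (2 * p) * ν Set.univ ≤ 1) (x : V) :
    ENNReal.ofReal (Real.exp (p * absLogPotential r ν x)) ≤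
      1 + ∫⁻ y, ENNReal.ofReal (Real.exp (1 / 2 * |logKernel r x y|))
        ∂(ENNReal.ofReal (2 * p) • ν) := by
  have hmeas := measurable_logKernel_right r x
  have hscale : p * absLogPotential r ν x =
      ∫ y, 1 / 2 * |logKernel r x y| ∂(ENNReal.ofReal (2 * p) • ν) := by
    rw [integral_smul_measure, integral_const_mul, ENNReal.toReal_ofReal (by positivity),
      smul_eq_mul, absLogPotential]
    ring
  rw [hscale]
  exact ofReal_exp_integral_le (by simpa using hν) (by fun_prop)

namespace IsUniformOnSphere

variable {σ : Measure V} {r : ℝ}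

lemma lintegral_exp_mul_absLogPotential_le (hσ : IsUniformOnSphere σ r) (hV : 2 ≤ finrank ℝ V)
    (hr : 0 < r) {p : ℝ} (hp : 0 ≤ p) {ν : Measure V} [SFinite ν]
    (hν : ENNReal.ofReal (2 * p) * ν Set.univ ≤ 1) :
    ∫⁻ x, ENNReal.ofReal (Real.exp (p * absLogPotential r ν x)) ∂σ ≤
      1 + 2 ^ (1 / 2 : ℝ) * sphereMomentBound V (-(1 / 2)) *
        (ENNReal.ofReal (2 * p) * ν Set.univ) := by
  have := hσ.isProbabilityMeasure
  have hmass : (ENNReal.ofReal (2 * p) • ν) Set.univ = ENNReal.ofReal (2 * p) * ν Set.univ := by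
    simp
  calc ∫⁻ x, ENNReal.ofReal (Real.exp (p * absLogPotential r ν x)) ∂σ
      ≤ ∫⁻ x, (1 + ∫⁻ y, ENNReal.ofReal (Real.exp (1 / 2 * |logKernel r x y|))
          ∂(ENNReal.ofReal (2 * p) • ν)) ∂σ :=
        lintegral_mono fun x => ofReal_exp_mul_absLogPotential_le hp r hν x
    _ = 1 + ∫⁻ x, ∫⁻ y, ENNReal.ofReal (Real.exp (1 / 2 * |logKernel r x y|))
          ∂(ENNReal.ofReal (2 * p) • ν) ∂σ := by
        rw [lintegral_add_left measurable_const, lintegral_one, measure_univ]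
    _ ≤ _ := by
        rw [← hmass]
        gcongr
        exact hσ.lintegral_lintegral_exp_mul_abs_logKernel_le hV hr one_half_pos one_half_lt_one _

lemma lintegral_exp_mul_absLogPotential_le_of_two_mul_le (hσ : IsUniformOnSphere σ r)
    (hV : 2 ≤ finrank ℝ V) (hr : 0 < r) {R : ℝ} (hR : 0 ≤ R) (hRr : 2 * R ≤ r) {p : ℝ} (hp : 0 ≤ p)
    {ν : Measure V} [IsFiniteMeasure ν]
    (hν : ENNReal.ofReal (2 * p) * ν (closedBall 0 R)ᶜ ≤ 1) :
    ∫⁻ x, ENNReal.ofReal (Real.exp (p * absLogPotential r ν x)) ∂σ ≤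
      ENNReal.ofReal (Real.exp (p * (2 * R / r * ν.real Set.univ))) *
        (1 + 2 ^ (1 / 2 : ℝ) * sphereMomentBound V (-(1 / 2)) *
          (ENNReal.ofReal (2 * p) * ν (closedBall 0 R)ᶜ)) := by
  rw [← Measure.restrict_apply_univ (closedBall 0 R)ᶜ] at hν ⊢
  refine le_trans ?_ (mul_le_mul_right (hσ.lintegral_exp_mul_absLogPotential_le hV hr hp hν) _)
  rw [← lintegral_const_mul' _ _ ENNReal.ofReal_ne_top]
  refine lintegral_mono_ae ?_
  filter_upwards [hσ.ae_norm_eq] with x hx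
  rw [← ENNReal.ofReal_mul (Real.exp_nonneg _), ← Real.exp_add, ← mul_add]
  gcongr
  exact absLogPotential_le_add hr hR hRr ν hx

end IsUniformOnSphere

lemma tendsto_lintegral_exp_mul_absLogPotential (hV : 2 ≤ finrank ℝ V) {σ : ℝ → Measure V}
    (hσ : ∀ᶠ r in atTop, IsUniformOnSphere (σ r) r) (ν : Measure V) [IsFiniteMeasure ν] {p : ℝ}
    (hp : 0 ≤ p) :
    Tendsto (fun r => ∫⁻ x, ENNReal.ofReal (Real.exp (p * absLogPotential r ν x)) ∂σ r) atTop
      (𝓝 1) := by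
  have hsmall : Tendsto (fun r : ℝ => ENNReal.ofReal (2 * p) * ν (closedBall 0 √r)ᶜ) atTop
      (𝓝 0) := by
    have htight : Tendsto (fun R : ℝ => ν (closedBall 0 R)ᶜ) atTop (𝓝 0) := by
      simpa using tendsto_measure_compl_closedBall_of_isTightMeasureSet
        (isTightMeasureSet_singleton (μ := ν)) 0
    rw [← mul_zero (ENNReal.ofReal (2 * p))]
    exact ENNReal.Tendsto.const_mul (htight.comp Real.tendsto_sqrt_atTop)
      (.inr ENNReal.ofReal_ne_top)
  have hnear : Tendsto (fun r : ℝ =>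
      ENNReal.ofReal (Real.exp (p * (2 * √r / r * ν.real Set.univ)))) atTop (𝓝 1) := by
    have hexponent : Tendsto (fun r : ℝ => p * (2 * √r / r * ν.real Set.univ)) atTop (𝓝 0) := by
      simpa [mul_div_assoc] using
        ((tendsto_sqrt_div_self_atTop.const_mul 2).mul_const (ν.real Set.univ)).const_mul p
    simpa using ENNReal.tendsto_ofReal ((Real.continuous_exp.tendsto 0).comp hexponent)
  have hfar : Tendsto (fun r : ℝ => 1 + 2 ^ (1 / 2 : ℝ) * sphereMomentBound V (-(1 / 2)) *
      (ENNReal.ofReal (2 * p) * ν (closedBall 0 √r)ᶜ)) atTop (𝓝 1) := by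
    have hbound : 2 ^ (1 / 2 : ℝ) * sphereMomentBound V (-(1 / 2)) ≠ ∞ :=
      ENNReal.mul_ne_top (ENNReal.rpow_ne_top_of_nonneg (by simp) (by simp))
        (sphereMomentBound_lt_top (by norm_num) (by norm_num)).ne
    simpa only [mul_zero, add_zero] using
      (ENNReal.Tendsto.const_mul hsmall (.inr hbound)).const_add 1
  have hupper := ENNReal.Tendsto.mul hnear (.inl one_ne_zero) hfar (.inl one_ne_zero)
  rw [mul_one] at hupper
  refine tendsto_of_tendsto_of_tendsto_of_le_of_le' tendsto_const_nhds hupper ?_ ?_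
  · filter_upwards [hσ] with r hr
    have := hr.isProbabilityMeasure
    exact one_le_lintegral_exp_mul_absLogPotential hp r ν (σ r)
  · filter_upwards [hσ, hsmall.eventually_le_const zero_lt_one, eventually_ge_atTop 4]
      with r hr hle hr4
    have h2 : 2 ≤ √r := Real.le_sqrt_of_sq_le (by linarith)
    exact hr.lintegral_exp_mul_absLogPotential_le_of_two_mul_le hV (by linarith)
      (Real.sqrt_nonneg r) (by nlinarith [Real.mul_self_sqrt (by linarith : 0 ≤ r)]) hp hle

/-- `u` is, up to a constant, the logarithmic potential of the density `f` with respect to `μ`. The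
additive constant is allowed inside the integral (`A`), where the formula in `IsNormal` puts it, as
well as outside (`C`). Where the integral diverges, the formula gives the value `C`. -/
def IsLogPotential (μ : Measure V) (f u : V → ℝ) : Prop :=
  ∃ A C : ℝ, ∀ x, u x = (∫ y, (Real.log (‖y‖ / ‖x - y‖) * f y + A) ∂μ) + C

lemma IsUniformOnSphere.ae_integrable_logKernel_mul {σ μ : Measure V} {r : ℝ}
    (hσ : IsUniformOnSphere σ r) (hV : 2 ≤ finrank ℝ V) (hr : 0 < r) {f : V → ℝ}
    (hf : Integrable f μ) : ∀ᵐ x ∂σ, Integrable (fun y => logKernel r x y * f y) μ := by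
  have := isFiniteMeasure_withDensity hf.2.ne
  filter_upwards [hσ.ae_integrable_logKernel hV hr (μ.withDensity fun y => ‖f y‖ₑ)] with x hx
  rw [integrable_withDensity_iff_integrable_smul₀' hf.aemeasurable.enorm
    (ae_of_all _ fun _ => enorm_lt_top)] at hx
  refine hx.congr' ((measurable_logKernel_right r x).aestronglyMeasurable.mul
    hf.aestronglyMeasurable) (ae_of_all _ fun y => ?_)
  simp [norm_mul, mul_comm]

namespace IsLogPotential

variable {μ : Measure V} {f u : V → ℝ}

lemma measurable [SFinite μ] (hu : IsLogPotential μ f u) (hf : AEStronglyMeasurable f μ) :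
    Measurable u := by
  obtain ⟨A, C, hu⟩ := hu
  have hmk (x : V) : u x = (∫ y, (Real.log (‖y‖ / ‖x - y‖) * hf.mk f y + A) ∂μ) + C := by
    rw [hu x]
    congr 1
    refine integral_congr_ae ?_
    filter_upwards [hf.ae_eq_mk] with y hy
    rw [hy]
  have hmeas : Measurable fun z : V × V => Real.log (‖z.2‖ / ‖z.1 - z.2‖) * hf.mk f z.2 + A := by
    have := hf.stronglyMeasurable_mk.measurable
    fun_prop
  rw [funext hmk]
  exact (hmeas.stronglyMeasurable.integral_prod_right (ν := μ)).measurable.add_const C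

/- Replacing the kernel `log (‖y‖ / ‖x - y‖)` by `logKernel r x y` changes the integrand by a
function of `y` alone. If that function is not integrable, then `u` is almost everywhere constant
on the sphere, by Lean's convention for integrals of non-integrable functions. -/
lemma exists_ae_abs_sub_le_absLogPotential [NullSingletonClass μ] (hu : IsLogPotential μ f u)
    (hV : 2 ≤ finrank ℝ V) (hf : Integrable f μ) {r : ℝ} (hr : 0 < r) {σ : Measure V}
    (hσ : IsUniformOnSphere σ r) :
    ∃ d, ∀ᵐ x ∂σ, |u x - d| ≤ absLogPotential r (μ.withDensity fun y => ‖f y‖ₑ) x := by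
  obtain ⟨A, C, hu⟩ := hu
  set h : V → ℝ := fun y => Real.log (max ‖y‖ r / ‖y‖) * f y - A
  have hsplit (x : V) : (fun y => Real.log (‖y‖ / ‖x - y‖) * f y + A) =ᵐ[μ]
      (fun y => logKernel r x y * f y) - h := by
    filter_upwards [log_div_ae_eq_logKernel_sub hr x] with y hy
    rw [hy, Pi.sub_apply]
    ring
  by_cases hh : Integrable h μ
  · refine ⟨C - ∫ y, h y ∂μ, ?_⟩
    filter_upwards [hσ.ae_integrable_logKernel_mul hV hr hf] with x hx
    have hdiff : u x - (C - ∫ y, h y ∂μ) = ∫ y, logKernel r x y * f y ∂μ := by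
      rw [hu x, integral_congr_ae (hsplit x), integral_sub' hx hh]
      ring
    rw [hdiff]
    exact abs_integral_logKernel_mul_le hf.aemeasurable r x
  · refine ⟨C, ?_⟩
    filter_upwards [hσ.ae_integrable_logKernel_mul hV hr hf] with x hx
    have hdiv : ¬ Integrable (fun y => Real.log (‖y‖ / ‖x - y‖) * f y + A) μ := by
      rw [integrable_congr (hsplit x)]
      exact fun hi => hh (by simpa using hx.sub hi)
    rw [hu x, integral_undef hdiv, zero_add, sub_self, abs_zero]
    exact absLogPotential_nonneg _ _ _

end IsLogPotential

theorem IsLogPotential.tendsto_integral_exp_mul_sub_integral {μ : Measure V} [SFinite μ]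
    [NullSingletonClass μ] {f u : V → ℝ} (hu : IsLogPotential μ f u) (hV : 2 ≤ finrank ℝ V)
    (hf : Integrable f μ) {σ : ℝ → Measure V} (hσ : ∀ᶠ r in atTop, IsUniformOnSphere (σ r) r)
    (k : ℝ) :
    Tendsto (fun r => ∫ x, Real.exp (k * (u x - ∫ z, u z ∂σ r)) ∂σ r) atTop (𝓝 1) := by
  have := isFiniteMeasure_withDensity hf.2.ne
  have hlim (p : ℝ) (hp : 0 ≤ p) := tendsto_lintegral_exp_mul_absLogPotential hV hσ
    (μ.withDensity fun y => ‖f y‖ₑ) hp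
  have hbounds : ∀ᶠ r in atTop, 1 ≤ ∫ x, Real.exp (k * (u x - ∫ z, u z ∂σ r)) ∂σ r ∧
      ∫ x, Real.exp (k * (u x - ∫ z, u z ∂σ r)) ∂σ r ≤
        (∫⁻ x, ENNReal.ofReal (Real.exp (|k| *
          absLogPotential r (μ.withDensity fun y => ‖f y‖ₑ) x)) ∂σ r).toReal ^ 2 := by
    filter_upwards [hσ, eventually_gt_atTop 0,
      (hlim 1 zero_le_one).eventually_lt_const ENNReal.one_lt_top,
      (hlim |k| (abs_nonneg k)).eventually_lt_const ENNReal.one_lt_top] with r hr hr0 h1 hk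
    have := hr.isProbabilityMeasure
    have humeas : Measurable u := hu.measurable hf.aestronglyMeasurable
    obtain ⟨d, hd⟩ := hu.exists_ae_abs_sub_le_absLogPotential hV hf hr0 hr
    have hint : Integrable u (σ r) :=
      integrable_of_integrable_exp_abs_sub humeas.aestronglyMeasurable (d := d) <| by
        simpa using (integrable_exp_mul_and_integral_le (by fun_prop) hd zero_le_one h1.ne).1
    obtain ⟨hexp, hle⟩ := integrable_exp_mul_and_integral_le (by fun_prop) hd (abs_nonneg k) hk.ne
    exact ⟨one_le_integral_exp_mul_sub_integral hint hexp,
      (integral_exp_mul_sub_integral_le_sq hint hexp).trans (by gcongr)⟩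
  refine tendsto_of_tendsto_of_tendsto_of_le_of_le' tendsto_const_nhds ?_
    (hbounds.mono fun _ h => h.1) (hbounds.mono fun _ h => h.2)
  simpa using ((ENNReal.tendsto_toReal ENNReal.one_ne_top).comp (hlim |k| (abs_nonneg k))).pow 2

section HausdorffMeasure

variable {r : ℝ}

lemma hausdorffMeasure_sphere_inter_halfSpace_lt_top {v : V} (hv : ‖v‖ = 1) :
    μH[(finrank ℝ V : ℝ) - 1] (sphere (0 : V) 1 ∩ {x | ⟪v, x⟫ ≤ 0}) < ∞ := by
  set S := sphere (0 : V) 1 ∩ {x | ⟪v, x⟫ ≤ 0}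
  have hcompact : IsCompact (stereoToFun v '' S) := by
    refine ((isCompact_sphere _ _).inter_right (isClosed_le (by fun_prop) continuous_const)
      ).image_of_continuousOn (continuousOn_stereoToFun.mono fun x hx => ?_)
    have hx' : ⟪v, x⟫ ≤ 0 := hx.2
    exact (hx'.trans_lt one_pos).ne
  have hsmooth : ContDiff ℝ 1 (stereoInvFunAux v ∘ ((↑) : (ℝ ∙ v)ᗮ → V)) :=
    contDiff_stereoInvFunAux.comp (ℝ ∙ v)ᗮ.subtypeL.contDiff
  obtain ⟨C, hC⟩ :=
    hsmooth.locallyLipschitz.locallyLipschitzOn.exists_lipschitzOnWith_of_compact hcompact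
  have hcover : S ⊆ (stereoInvFunAux v ∘ ((↑) : (ℝ ∙ v)ᗮ → V)) '' (stereoToFun v '' S) := by
    refine fun x hx => ⟨stereoToFun v x, ⟨x, hx, rfl⟩, ?_⟩
    have hxv : x ≠ v := by
      rintro rfl
      have hxx : ⟪x, x⟫ ≤ 0 := hx.2
      norm_num [real_inner_self_eq_norm_sq, hv] at hxx
    exact congrArg Subtype.val (stereo_left_inv hv (x := ⟨x, hx.1⟩) hxv)
  rw [← cast_finrank_orthogonal_span_singleton (norm_ne_zero_iff.1 (by simp [hv] : ‖v‖ ≠ 0))]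
  exact (measure_mono hcover).trans_lt ((hC.hausdorffMeasure_image_le (by simp)).trans_lt
    (ENNReal.mul_lt_top (by simp) hcompact.measure_lt_top))

variable [Nontrivial V]

lemma hausdorffMeasure_sphere_lt_top (hr : 0 < r) :
    μH[(finrank ℝ V : ℝ) - 1] (sphere (0 : V) r) < ∞ := by
  obtain ⟨v, hv⟩ := exists_norm_eq V zero_le_one
  have hscale : sphere (0 : V) r = r • sphere (0 : V) 1 := by
    rw [smul_sphere' hr.ne']
    simp [abs_of_pos hr]
  have hcover : sphere (0 : V) 1 ⊆
      (sphere 0 1 ∩ {x | ⟪v, x⟫ ≤ 0}) ∪ (sphere 0 1 ∩ {x | ⟪-v, x⟫ ≤ 0}) := by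
    intro x hx
    rcases le_total ⟪v, x⟫ 0 with h | h
    · exact .inl ⟨hx, h⟩
    · exact .inr ⟨hx, by simpa using h⟩
  rw [hscale, Measure.hausdorffMeasure_smul₀ finrank_sub_one_nonneg hr.ne']
  exact ENNReal.mul_lt_top (by simp) ((measure_mono hcover).trans_lt (measure_union_lt_top
    (hausdorffMeasure_sphere_inter_halfSpace_lt_top hv)
    (hausdorffMeasure_sphere_inter_halfSpace_lt_top (by simpa using hv))))

lemma hausdorffMeasure_sphere_pos (hr : 0 < r) :
    0 < μH[(finrank ℝ V : ℝ) - 1] (sphere (0 : V) r) := by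
  obtain ⟨v, hv⟩ := exists_norm_eq V zero_le_one
  have hball : 0 < μH[(finrank ℝ V : ℝ) - 1] (ball (0 : (ℝ ∙ v)ᗮ) r) := by
    rw [← cast_finrank_orthogonal_span_singleton (norm_ne_zero_iff.1 (by simp [hv] : ‖v‖ ≠ 0))]
    exact measure_ball_pos _ _ hr
  exact hball.trans_le ((measure_mono
    (ball_subset_image_orthogonalProjectionOnto_sphere hv hr.le)).trans
    (hausdorffMeasure_orthogonalProjectionOnto_le _ _ _ finrank_sub_one_nonneg))

lemma isUniformOnSphere_cond_hausdorffMeasure (hr : 0 < r) :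
    IsUniformOnSphere (cond μH[(finrank ℝ V : ℝ) - 1] (sphere (0 : V) r)) r where
  isProbabilityMeasure := cond_isProbabilityMeasure_of_finite (hausdorffMeasure_sphere_pos hr).ne'
    (hausdorffMeasure_sphere_lt_top hr).ne
  ae_norm_eq := by
    filter_upwards [ae_cond_mem isClosed_sphere.measurableSet] with x hx
    simpa using hx
  measurePreserving L := by
    have hpre : L.toIsometryEquiv ⁻¹' sphere (0 : V) r = sphere 0 r := by
      ext x
      simp
    have hrestrict := (L.toIsometryEquiv.measurePreserving_hausdorffMeasure
      ((finrank ℝ V : ℝ) - 1)).restrict_preimage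
      (isClosed_sphere (x := (0 : V)) (ε := r)).measurableSet
    rw [hpre] at hrestrict
    exact hrestrict.smul_measure _

end HausdorffMeasure

theorem stmt_7_general {μ : Measure V} [SFinite μ] [NullSingletonClass μ] {f u : V → ℝ}
    (hV : 2 ≤ finrank ℝ V) (hf : Integrable f μ) (hu : IsLogPotential μ f u) (k : ℝ) :
    Tendsto (fun r : ℝ =>
      ⨍ x in sphere (0 : V) r,
        Real.exp (k * (u x - ⨍ z in sphere (0 : V) r, u z ∂μH[(finrank ℝ V : ℝ) - 1]))
        ∂μH[(finrank ℝ V : ℝ) - 1])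
      atTop (𝓝 1) := by
  have : Nontrivial V := finrank_pos_iff.1 (two_pos.trans_le hV)
  simp only [setAverage_eq']
  exact hu.tendsto_integral_exp_mul_sub_integral hV hf
    ((eventually_gt_atTop 0).mono fun r => isUniformOnSphere_cond_hausdorffMeasure) k

end

/-- `⨍_{∂B_r} e^{k(u−ū(r))} → 1` for every `k > 0`. -/
theorem stmt_7 (n : ℕ) (hn : 4 ≤ n) (hne : Even n)
    (u Q : E n → ℝ) (hu : ContDiff ℝ (⊤ : ℕ∞) u)
    (hint : Integrable (fun y => Q y * Real.exp (n * u y)))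
    (hnorm : IsNormal n u Q) (k : ℝ) (hk : 0 < k) :
    Tendsto
      (fun r : ℝ =>
        ⨍ x in Metric.sphere (0 : E n) r,
          Real.exp (k * (u x - ⨍ z in Metric.sphere (0 : E n) r, u z ∂μH[(n : ℝ) - 1]))
          ∂μH[(n : ℝ) - 1])
      atTop (nhds 1) := by
  have hrank : Module.finrank ℝ (E n) = n := finrank_euclideanSpace_fin
  have : Nontrivial (E n) := (Module.finrank_pos_iff (R := ℝ)).1 (by rw [hrank]; lia)
  obtain ⟨C, hC⟩ := hnorm
  set c := 2 / (Nat.factorial (n - 1) * sphereVol n)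
  have hpot : IsLogPotential volume (fun y => c * (Q y * Real.exp (n * u y))) u :=
    ⟨c * C, 0, fun x => by
      rw [hC, ← integral_const_mul, add_zero]
      exact integral_congr_ae (ae_of_all _ fun y => by ring)⟩
  simpa only [hrank] using stmt_7_general (hrank.symm ▸ (by lia : 2 ≤ n)) (hint.const_mul c) hpot k
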